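/- Fix N ≥ 1 and write a = 1/2^N; suppose ‖(t,s) − (t',s')‖_2 ≤ 1 for all (t,s),(t',s') ∈ SG' × SG''. Let f : SG' × SG'' → ℝ be the continuous function satisfying f(L_ω(t),K_η(s)) = α_{ωη}(t,s)·f(t,s) + h_{ωη}(t,s) for all ω,η ∈ I^N and (t,s) ∈ SG' × SG''. Suppose each h_{ωη} is Hölder continuous with exponent s_h ∈ (0,1] and constant K_h, and each α_{ωη} is Hölder continuous with exponent s_{α_{ωη}} ∈ (0,1] and constant K_{α_{ωη}}, with ‖α_{ωη}‖_∞ < 1. Set ‖α‖_∞ = max_{ω,η ∈ I^N} ‖α_{ωη}‖_∞, s_α = min_{ω,η} s_{α_{ωη}}, and s = min{s_h, s_α}. If ‖α‖_∞ = 1/2^N, then there exists μ with 0 < μ < s such that f is Hölder continuous with exponent s − μ: there is a constant C with |f(t,s) − f(t',s')| ≤ C·‖(t,s)−(t',s')‖_2^{s−μ} for all points of SG' × SG''. -/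

import Mathlib

noncomputable section

/-- Points of the plane ℝ². -/
abbrev E2 := EuclideanSpace ℝ (Fin 2)

/-- The contraction `L_i(t) = (t + p_i)/2` of the plane towards the vertex `p i`. -/
def Lmap (p : Fin 3 → E2) (i : Fin 3) (t : E2) : E2 := (2 : ℝ)⁻¹ • (t + p i)

/-- `p 1, p 2, p 3` are the vertices of an equilateral triangle: pairwise distinct
points with all three pairwise distances equal. -/
def IsEquilateral (p : Fin 3 → E2) : Prop :=
  Function.Injective p ∧
    ∀ i j k l : Fin 3, i ≠ j → k ≠ l → dist (p i) (p j) = dist (p k) (p l)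

/-- `S` is the Sierpiński gasket with vertex set `p`: the unique nonempty compact set
invariant under the three contractions `L_i(t) = (t + p_i)/2`. -/
def IsSG (p : Fin 3 → E2) (S : Set E2) : Prop :=
  IsEquilateral p ∧ S.Nonempty ∧ IsCompact S ∧ S = ⋃ i : Fin 3, Lmap p i '' S

/-- For a word `ω = ω₁ω₂…ω_n` over `I = {1,2,3}`, the composition
`L_ω = L_{ω₁} ∘ L_{ω₂} ∘ ⋯ ∘ L_{ω_n}`. -/
def wordMap (p : Fin 3 → E2) {n : ℕ} (ω : Fin n → Fin 3) : E2 → E2 :=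
  (List.ofFn fun k => Lmap p (ω k)).foldr (· ∘ ·) id

/-- The word alphabet `I^N`: words of length `N` over `I = {1,2,3}`. -/
abbrev Word (N : ℕ) := Fin N → Fin 3

/-- The Euclidean (`ℓ²`) distance `‖(t,s) − (t',s')‖₂` on the product `ℝ² × ℝ²`. -/
def dist2 (x y : E2 × E2) : ℝ := Real.sqrt (dist x.1 y.1 ^ 2 + dist x.2 y.2 ^ 2)

/-- `g` is Hölder continuous on `S` with constant `K` and exponent `β` (with respect
to the Euclidean distance on `ℝ² × ℝ²`). -/
def HolderOn2 (S : Set (E2 × E2)) (g : E2 × E2 → ℝ) (K β : ℝ) : Prop :=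
  ∀ x ∈ S, ∀ y ∈ S, |g x - g y| ≤ K * dist2 x y ^ β

/-- The sup-norm `‖g‖_∞ = sup_{x ∈ S} |g x|` of a function on `S`. -/
noncomputable def supAbs (S : Set (E2 × E2)) (g : E2 × E2 → ℝ) : ℝ :=
  sSup ((fun x => |g x|) '' S)

/-!
Since `‖α‖ ≤ 2⁻ᴺ < 2^(-Nβ)` for every `β < 1`, iterating the functional equation `n` times bounds
the oscillation of `f` on the product cells of level `nN` by a constant times `2^(-nNβ)`. Hölder
continuity follows once points at distance about `2^(-n)` are known to lie in level-`n` cells that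
meet, for `f` can then be compared along a common point of the two cells. In a gasket this property
is read off barycentric coordinates: two different first-level cells meet only at a midpoint of two
vertices, and points of the two cells with close coordinates must both be near that midpoint.
-/

open Set Bornology Function
open scoped NNReal

section IteratedFunctionSystem

variable {X Y ι κ : Type*}

/-- `S` is an attractor of the maps `F i`: a nonempty compact set that is the union of its images
under them. No contractivity is required of the `F i`. -/
structure IsAttractor [TopologicalSpace X] (F : ι → X → X) (S : Set X) : Prop where
  nonempty : S.Nonempty
  isCompact : IsCompact S
  eq_iUnion_image : S = ⋃ i, F i '' S

/-- Two points lie in a common level-`n` cell `F i₁ (F i₂ (⋯ (F iₙ S)))` of the maps `F i`. -/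
inductive SameCell (F : ι → X → X) (S : Set X) : ℕ → X → X → Prop
  | zero {x y : X} (hx : x ∈ S) (hy : y ∈ S) : SameCell F S 0 x y
  | succ {n : ℕ} {x y : X} (i : ι) (h : SameCell F S n x y) : SameCell F S (n + 1) (F i x) (F i y)

/-- Points of `S` at distance at most a constant multiple of `r ^ n` lie in level-`n` cells that
meet. This is how the separation of the disjoint cells at every scale enters the argument. -/
def CellsLinked [PseudoMetricSpace X] (F : ι → X → X) (S : Set X) (r : ℝ≥0) : Prop :=
  ∃ c : ℝ≥0, 0 < c ∧ ∀ n : ℕ, ∀ x ∈ S, ∀ y ∈ S, dist x y ≤ c * r ^ n →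
    ∃ z, SameCell F S n x z ∧ SameCell F S n y z

/-- The composition `F ω₀ ∘ F ω₁ ∘ ⋯ ∘ F ωₙ₋₁` along a word `ω` of length `n`. -/
def wordComp (F : ι → X → X) {n : ℕ} (ω : Fin n → ι) : X → X :=
  (List.ofFn fun k => F (ω k)).foldr (· ∘ ·) id

/-- The product of two iterated function systems, acting coordinatewise and indexed by pairs. -/
def prodIFS (F : ι → X → X) (G : κ → Y → Y) (i : ι × κ) : X × Y → X × Y :=
  Prod.map (F i.1) (G i.2)

variable {F : ι → X → X} {G : κ → Y → Y} {S : Set X} {T : Set Y} {r : ℝ≥0}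

namespace IsAttractor

theorem mapsTo [TopologicalSpace X] (hS : IsAttractor F S) (i : ι) : MapsTo (F i) S S := by
  intro x hx
  rw [hS.eq_iUnion_image]
  exact mem_iUnion.2 ⟨i, x, hx, rfl⟩

theorem exists_eq_apply [TopologicalSpace X] (hS : IsAttractor F S) {x : X} (hx : x ∈ S) :
    ∃ i, ∃ y ∈ S, F i y = x := by
  rw [hS.eq_iUnion_image] at hx
  exact mem_iUnion.1 hx

theorem mem_of_isFixedPt [MetricSpace X] (hS : IsAttractor F S) {i : ι} (hF : LipschitzWith r (F i))
    (hr : r < 1) {x : X} (hx : IsFixedPt (F i) x) : x ∈ S := by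
  obtain ⟨y, hy, hmin⟩ :=
    hS.isCompact.exists_isMinOn hS.nonempty (f := fun y => dist y x) (by fun_prop)
  have hle : dist y x ≤ r * dist y x := calc
    dist y x ≤ dist (F i y) x := hmin (hS.mapsTo i hy)
    _ = dist (F i y) (F i x) := by rw [hx]
    _ ≤ r * dist y x := hF.dist_le_mul y x
  have : dist y x = 0 := by
    nlinarith [dist_nonneg (x := y) (y := x), NNReal.coe_lt_one.2 hr]
  rwa [← dist_eq_zero.1 this]

end IsAttractor

theorem wordComp_zero (ω : Fin 0 → ι) : wordComp F ω = id := by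
  simp [wordComp]

theorem wordComp_cons {n : ℕ} (i : ι) (ω : Fin n → ι) :
    wordComp F (Fin.cons i ω : Fin (n + 1) → ι) = F i ∘ wordComp F ω := by
  simp [wordComp, List.ofFn_succ]

theorem mapsTo_wordComp (hF : ∀ i, MapsTo (F i) S S) {n : ℕ} (ω : Fin n → ι) :
    MapsTo (wordComp F ω) S S := by
  induction ω using Fin.consInduction with
  | elim0 => exact wordComp_zero (F := F) _ ▸ mapsTo_id S
  | cons i ω ih => exact wordComp_cons (F := F) i ω ▸ (hF i).comp ih

theorem lipschitzWith_wordComp [PseudoEMetricSpace X] (hF : ∀ i, LipschitzWith r (F i)) {n : ℕ}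
    (ω : Fin n → ι) : LipschitzWith (r ^ n) (wordComp F ω) := by
  induction ω using Fin.consInduction with
  | elim0 => simpa [wordComp_zero] using LipschitzWith.id
  | cons i ω ih => simpa only [wordComp_cons, pow_succ'] using (hF i).comp ih

theorem mapsTo_prodIFS (hF : ∀ i, MapsTo (F i) S S) (hG : ∀ j, MapsTo (G j) T T) (i : ι × κ) :
    MapsTo (prodIFS F G i) (S ×ˢ T) (S ×ˢ T) :=
  (hF i.1).prodMap (hG i.2)

theorem lipschitzWith_prodIFS [PseudoEMetricSpace X] [PseudoEMetricSpace Y]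
    (hF : ∀ i, LipschitzWith r (F i)) (hG : ∀ j, LipschitzWith r (G j)) (i : ι × κ) :
    LipschitzWith r (prodIFS F G i) := by
  have h := ((hF i.1).comp LipschitzWith.prod_fst).prodMk ((hG i.2).comp LipschitzWith.prod_snd)
  rwa [mul_one, max_self] at h

namespace SameCell

theorem mem {n : ℕ} {x y : X} (hF : ∀ i, MapsTo (F i) S S) (h : SameCell F S n x y) :
    x ∈ S ∧ y ∈ S := by
  induction h with
  | zero hx hy => exact ⟨hx, hy⟩
  | succ i _ ih => exact ⟨hF i ih.1, hF i ih.2⟩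

theorem dist_le [PseudoMetricSpace X] {D : ℝ} (hF : ∀ i, LipschitzWith r (F i))
    (hD : ∀ x ∈ S, ∀ y ∈ S, dist x y ≤ D) {n : ℕ} {x y : X} (h : SameCell F S n x y) :
    dist x y ≤ r ^ n * D := by
  induction h with
  | zero hx hy => simpa using hD _ hx _ hy
  | @succ n x y i _ ih =>
    calc dist (F i x) (F i y) ≤ r * dist x y := (hF i).dist_le_mul x y
      _ ≤ r * (r ^ n * D) := by gcongr
      _ = r ^ (n + 1) * D := by ring

theorem prodIFS {n : ℕ} {x y : X × Y} (h₁ : SameCell F S n x.1 y.1)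
    (h₂ : SameCell G T n x.2 y.2) : SameCell (prodIFS F G) (S ×ˢ T) n x y := by
  obtain ⟨x₁, x₂⟩ := x
  obtain ⟨y₁, y₂⟩ := y
  simp only at h₁ h₂
  induction h₁ generalizing x₂ y₂ with
  | zero hx₁ hy₁ =>
    obtain ⟨hx₂, hy₂⟩ := h₂
    exact zero ⟨hx₁, hx₂⟩ ⟨hy₁, hy₂⟩
  | succ i _ ih =>
    obtain _ | ⟨j, h₂⟩ := h₂
    exact succ (i, j) (ih _ _ h₂)

theorem exists_eq_wordComp {m n : ℕ} {x y : X} (h : SameCell F S (m + n) x y) :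
    ∃ (ω : Fin n → ι) (u v : X), SameCell F S m u v ∧ wordComp F ω u = x ∧ wordComp F ω v = y := by
  induction n generalizing x y with
  | zero => exact ⟨Fin.elim0, x, y, h, by simp [wordComp_zero]⟩
  | succ n ih =>
    obtain _ | ⟨i, h⟩ := h
    obtain ⟨ω, u, v, huv, rfl, rfl⟩ := ih h
    exact ⟨Fin.cons i ω, u, v, huv, by simp [wordComp_cons]⟩

theorem wordComp {N n : ℕ} {x y : X} (h : SameCell F S (n * N) x y) :
    SameCell (wordComp F : (Fin N → ι) → X → X) S n x y := by
  induction n generalizing x y with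
  | zero =>
    rw [zero_mul] at h
    obtain ⟨hx, hy⟩ := h
    exact zero hx hy
  | succ n ih =>
    rw [Nat.succ_mul] at h
    obtain ⟨ω, u, v, huv, rfl, rfl⟩ := h.exists_eq_wordComp
    exact succ ω (ih huv)

end SameCell

namespace CellsLinked

theorem wordComp [PseudoMetricSpace X] (h : CellsLinked F S r) (N : ℕ) :
    CellsLinked (wordComp F : (Fin N → ι) → X → X) S (r ^ N) := by
  obtain ⟨c, hc, hlink⟩ := h
  refine ⟨c, hc, fun n x hx y hy hxy => ?_⟩
  rw [NNReal.coe_pow, ← pow_mul, mul_comm N n] at hxy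
  obtain ⟨z, hxz, hyz⟩ := hlink (n * N) x hx y hy hxy
  exact ⟨z, hxz.wordComp, hyz.wordComp⟩

theorem prodIFS [PseudoMetricSpace X] [PseudoMetricSpace Y] (hF : CellsLinked F S r)
    (hG : CellsLinked G T r) : CellsLinked (prodIFS F G) (S ×ˢ T) r := by
  obtain ⟨c, hc, hlinkF⟩ := hF
  obtain ⟨d, hd, hlinkG⟩ := hG
  refine ⟨min c d, lt_min hc hd, fun n x hx y hy hxy => ?_⟩
  have hc_le : ((min c d : ℝ≥0) : ℝ) ≤ c := by exact_mod_cast min_le_left c d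
  have hd_le : ((min c d : ℝ≥0) : ℝ) ≤ d := by exact_mod_cast min_le_right c d
  obtain ⟨z, hxz, hyz⟩ := hlinkF n x.1 hx.1 y.1 hy.1
    ((le_max_left _ _).trans (hxy.trans (by gcongr)))
  obtain ⟨w, hxw, hyw⟩ := hlinkG n x.2 hx.2 y.2 hy.2
    ((le_max_right _ _).trans (hxy.trans (by gcongr)))
  exact ⟨(z, w), .prodIFS hxz hxw, .prodIFS hyz hyw⟩

theorem exists_sameCell [MetricSpace X] (h : CellsLinked F S r) (hr : r < 1) :
    ∃ c : ℝ≥0, 0 < c ∧ ∀ x ∈ S, ∀ y ∈ S, x ≠ y →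
      ∃ n z, SameCell F S n x z ∧ SameCell F S n y z ∧ c * r ^ (n + 1) ≤ dist x y := by
  obtain ⟨c, hc, hlink⟩ := h
  refine ⟨c, hc, fun x hx y hy hxy => ?_⟩
  have hsmall : ∃ n : ℕ, c * r ^ (n + 1) ≤ dist x y := by
    obtain ⟨n, hn⟩ := exists_pow_lt_of_lt_one
      (div_pos (dist_pos.2 hxy) (NNReal.coe_pos.2 hc)) (NNReal.coe_lt_one.2 hr)
    have hpow : (r : ℝ) ^ (n + 1) ≤ r ^ n := pow_le_pow_of_le_one r.coe_nonneg hr.le n.le_succ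
    rw [lt_div_iff₀' (NNReal.coe_pos.2 hc)] at hn
    exact ⟨n, (mul_le_mul_of_nonneg_left hpow c.coe_nonneg).trans hn.le⟩
  classical
  obtain ⟨n, hn, hmin⟩ : ∃ n, c * r ^ (n + 1) ≤ dist x y ∧
      ∀ m < n, ¬ (c * r ^ (m + 1) : ℝ) ≤ dist x y :=
    ⟨Nat.find hsmall, Nat.find_spec hsmall, fun _ => Nat.find_min hsmall⟩
  cases n with
  | zero => exact ⟨0, x, .zero hx hx, .zero hy hx, hn⟩
  | succ n =>
    obtain ⟨z, hxz, hyz⟩ := hlink (n + 1) x hx y hy (not_le.1 (hmin n n.lt_succ_self)).le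
    exact ⟨n + 1, z, hxz, hyz, hn⟩

end CellsLinked

end IteratedFunctionSystem

section Holder

variable {X Y ι : Type*} {F : ι → X → X} {S : Set X} {f : X → Y} {r β A : ℝ≥0}

theorem holderOnWith_of_dist_le [PseudoMetricSpace X] [PseudoMetricSpace Y] {C : ℝ≥0}
    (h : ∀ x ∈ S, ∀ y ∈ S, dist (f x) (f y) ≤ C * dist x y ^ (β : ℝ)) :
    HolderOnWith C β f S := by
  intro x hx y hy
  rw [edist_nndist, edist_nndist, ← ENNReal.coe_rpow_of_nonneg _ β.coe_nonneg, ← ENNReal.coe_mul,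
    ENNReal.coe_le_coe]
  exact h x hx y hy

theorem exists_holderOnWith_of_le [PseudoMetricSpace X] [PseudoMetricSpace Y] {C γ : ℝ≥0}
    (hS : IsBounded S) (hf : HolderOnWith C γ f S) (hβ : β ≤ γ) : ∃ C', HolderOnWith C' β f S := by
  obtain ⟨D, hD⟩ := Metric.isBounded_iff_nndist.1 hS
  refine ⟨_, hf.of_le (D := D) (fun x hx y hy => ?_) hβ⟩
  rw [edist_nndist]
  exact_mod_cast hD hx hy

/-- `C = M + K D ^ β / (r ^ β - A)` solves `A C + K D ^ β ≤ C r ^ β`, the condition under which the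
bound passes from one level of cells to the next. -/
theorem exists_dist_le_of_sameCell [PseudoMetricSpace X] [PseudoMetricSpace Y] {K : ℝ≥0}
    (hF : ∀ i, LipschitzWith r (F i)) (hFS : ∀ i, MapsTo (F i) S S) (hS : IsBounded S)
    (hfS : IsBounded (f '' S)) (hA : A < r ^ (β : ℝ))
    (hf : ∀ i, ∀ x ∈ S, ∀ y ∈ S,
      dist (f (F i x)) (f (F i y)) ≤ A * dist (f x) (f y) + K * dist x y ^ (β : ℝ)) :
    ∃ C : ℝ≥0, ∀ n x y, SameCell F S n x y → dist (f x) (f y) ≤ C * (r ^ n : ℝ) ^ (β : ℝ) := by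
  obtain ⟨D, hD⟩ := Metric.isBounded_iff_nndist.1 hS
  obtain ⟨M, hM⟩ := Metric.isBounded_iff_nndist.1 hfS
  have hgap : (0 : ℝ) < r ^ (β : ℝ) - A := sub_pos.2 (by exact_mod_cast hA)
  obtain ⟨C, hMC, hC⟩ : ∃ C : ℝ, M ≤ C ∧ A * C + K * (D : ℝ) ^ (β : ℝ) ≤ C * r ^ (β : ℝ) := by
    refine ⟨M + K * (D : ℝ) ^ (β : ℝ) / (r ^ (β : ℝ) - A),
      le_add_of_nonneg_right (by positivity), ?_⟩
    have hcancel := div_mul_cancel₀ (K * (D : ℝ) ^ (β : ℝ)) hgap.ne'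
    have := mul_nonneg M.coe_nonneg hgap.le
    linarith
  lift C to ℝ≥0 using M.coe_nonneg.trans hMC
  refine ⟨C, fun n x y h => ?_⟩
  induction h with
  | zero hx hy => simpa using le_trans (hM (mem_image_of_mem f hx) (mem_image_of_mem f hy)) hMC
  | @succ n x y i h ih =>
    obtain ⟨hx, hy⟩ := h.mem hFS
    have hdist : dist x y ≤ r ^ n * D := h.dist_le hF fun x hx y hy => hD hx hy
    calc dist (f (F i x)) (f (F i y))
        ≤ A * dist (f x) (f y) + K * dist x y ^ (β : ℝ) := hf i x hx y hy
      _ ≤ A * (C * (r ^ n : ℝ) ^ (β : ℝ)) + K * (r ^ n * D : ℝ) ^ (β : ℝ) := by gcongr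
      _ = (A * C + K * (D : ℝ) ^ (β : ℝ)) * (r ^ n : ℝ) ^ (β : ℝ) := by
        rw [Real.mul_rpow (by positivity) D.coe_nonneg]; ring
      _ ≤ C * r ^ (β : ℝ) * (r ^ n : ℝ) ^ (β : ℝ) := by gcongr
      _ = C * (r ^ (n + 1) : ℝ) ^ (β : ℝ) := by
        rw [pow_succ', Real.mul_rpow r.coe_nonneg (by positivity)]; ring

theorem CellsLinked.exists_holderOnWith [MetricSpace X] [PseudoMetricSpace Y] {C : ℝ≥0}
    (hlink : CellsLinked F S r) (hr₀ : 0 < r) (hr₁ : r < 1)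
    (hf : ∀ n x y, SameCell F S n x y → dist (f x) (f y) ≤ C * (r ^ n : ℝ) ^ (β : ℝ)) :
    ∃ C', HolderOnWith C' β f S := by
  obtain ⟨c, hc, hlink⟩ := hlink.exists_sameCell hr₁
  refine ⟨2 * C * ((c * r)⁻¹) ^ (β : ℝ), holderOnWith_of_dist_le fun x hx y hy => ?_⟩
  obtain rfl | hxy := eq_or_ne x y
  · rw [dist_self]; positivity
  obtain ⟨n, z, hxz, hyz, hn⟩ := hlink x hx y hy hxy
  have hpow : (r ^ n : ℝ) ≤ (c * r : ℝ)⁻¹ * dist x y := by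
    have : (0 : ℝ) < c * r := by positivity
    rw [← div_eq_inv_mul, le_div_iff₀ this]
    linarith [show (c * r ^ (n + 1) : ℝ) = r ^ n * (c * r) by ring]
  calc dist (f x) (f y) ≤ dist (f x) (f z) + dist (f y) (f z) := dist_triangle_right _ _ _
    _ ≤ C * (r ^ n : ℝ) ^ (β : ℝ) + C * (r ^ n : ℝ) ^ (β : ℝ) :=
      add_le_add (hf _ _ _ hxz) (hf _ _ _ hyz)
    _ = 2 * C * (r ^ n : ℝ) ^ (β : ℝ) := by ring
    _ ≤ 2 * C * ((c * r : ℝ)⁻¹ * dist x y) ^ (β : ℝ) := by gcongr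
    _ = (2 * C * ((c * r)⁻¹) ^ (β : ℝ) : ℝ≥0) * dist x y ^ (β : ℝ) := by
      rw [Real.mul_rpow (by positivity) dist_nonneg]
      push_cast
      ring

theorem dist_smul_add_smul_add_le {𝕜 E : Type*} [NormedField 𝕜] [SeminormedAddCommGroup E]
    [NormedSpace 𝕜 E] (a b : 𝕜) (u v w z : E) :
    dist (a • u + w) (b • v + z) ≤ ‖a‖ * dist u v + dist a b * ‖v‖ + dist w z := by
  calc dist (a • u + w) (b • v + z)
      ≤ dist (a • u) (b • v) + dist w z := dist_add_add_le _ _ _ _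
    _ ≤ dist (a • u) (a • v) + dist (a • v) (b • v) + dist w z := by
      gcongr; exact dist_triangle _ _ _
    _ = ‖a‖ * dist u v + dist a b * ‖v‖ + dist w z := by
      rw [dist_smul₀, dist_eq_norm (a • v), ← sub_smul, norm_smul, dist_eq_norm a]

theorem exists_holderOnWith_of_apply_eq_smul_add [MetricSpace X] [Finite ι]
    {𝕜 E : Type*} [NormedField 𝕜] [SeminormedAddCommGroup E] [NormedSpace 𝕜 E]
    {α : ι → X → 𝕜} {h : ι → X → E} {f : X → E}
    (hF : ∀ i, LipschitzWith r (F i)) (hr₀ : 0 < r) (hr₁ : r < 1)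
    (hFS : ∀ i, MapsTo (F i) S S) (hS : IsBounded S) (hlink : CellsLinked F S r)
    (hfS : IsBounded (f '' S)) (hf : ∀ i, ∀ x ∈ S, f (F i x) = α i x • f x + h i x)
    (hα : ∀ i, ∃ C, HolderOnWith C β (α i) S) (hh : ∀ i, ∃ C, HolderOnWith C β (h i) S)
    (hαA : ∀ i, ∀ x ∈ S, ‖α i x‖ ≤ A) (hA : A < r ^ (β : ℝ)) :
    ∃ C, HolderOnWith C β f S := by
  choose Cα hα using hα
  choose Ch hh using hh
  obtain ⟨Kα, hKα⟩ := Finite.exists_le Cα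
  obtain ⟨Kh, hKh⟩ := Finite.exists_le Ch
  obtain ⟨M, hM⟩ : ∃ M : ℝ≥0, ∀ x ∈ S, ‖f x‖ ≤ M := by
    obtain ⟨M, hM₀, hM⟩ := hfS.exists_pos_norm_le
    exact ⟨⟨M, hM₀.le⟩, fun x hx => hM _ (mem_image_of_mem f hx)⟩
  have hstep : ∀ i, ∀ x ∈ S, ∀ y ∈ S, dist (f (F i x)) (f (F i y)) ≤
      A * dist (f x) (f y) + (Kα * M + Kh : ℝ≥0) * dist x y ^ (β : ℝ) := by
    intro i x hx y hy
    have hdα := ((hα i).mono_const (hKα i)).dist_le hx hy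
    have hdh := ((hh i).mono_const (hKh i)).dist_le hx hy
    calc dist (f (F i x)) (f (F i y))
        ≤ ‖α i x‖ * dist (f x) (f y) + dist (α i x) (α i y) * ‖f y‖ + dist (h i x) (h i y) := by
          rw [hf i x hx, hf i y hy]; exact dist_smul_add_smul_add_le _ _ _ _ _ _
      _ ≤ A * dist (f x) (f y) + Kα * dist x y ^ (β : ℝ) * M + Kh * dist x y ^ (β : ℝ) := by
          gcongr
          exacts [hαA i x hx, hM y hy]
      _ = _ := by push_cast; ring
  obtain ⟨C, hC⟩ := exists_dist_le_of_sameCell hF hFS hS hfS hA hstep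
  exact hlink.exists_holderOnWith hr₀ hr₁ hC

end Holder

section SimplexIFS

variable {ι V P : Type*} [NormedAddCommGroup V] [NormedSpace ℝ V] [MetricSpace P]
  [NormedAddTorsor V P] {S : Set P}

/-- The maps contracting space by the factor `1 / 2` towards each of the points `p i`; their
attractor is the Sierpiński gasket when the `p i` are the vertices of a triangle, and its
higher-dimensional analogue when they are those of a simplex. -/
def simplexIFS (p : ι → P) (i : ι) (x : P) : P := midpoint ℝ x (p i)

theorem lipschitzWith_simplexIFS (p : ι → P) (i : ι) : LipschitzWith 2⁻¹ (simplexIFS p i) :=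
  LipschitzWith.of_dist_le_mul fun x y => by
    simpa [simplexIFS, div_eq_inv_mul] using dist_midpoint_midpoint_le' (𝕜 := ℝ) x (p i) y (p i)

theorem map_simplexIFS (φ : P →ᵃ[ℝ] ℝ) (p : ι → P) (i : ι) (x : P) :
    φ (simplexIFS p i x) = (φ x + φ (p i)) / 2 := by
  rw [simplexIFS, AffineMap.map_midpoint, midpoint_eq_smul_add, invOf_eq_inv, smul_eq_mul]
  ring

theorem IsAttractor.map_le_of_forall_vertex {p : ι → P} (hS : IsAttractor (simplexIFS p) S)
    {φ : P →ᵃ[ℝ] ℝ} (hφ : Continuous φ) {M : ℝ} (hM : ∀ i, φ (p i) ≤ M) {x : P} (hx : x ∈ S) :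
    φ x ≤ M := by
  obtain ⟨y, hy, hmax⟩ := hS.isCompact.exists_isMaxOn hS.nonempty hφ.continuousOn
  obtain ⟨i, z, hz, rfl⟩ := hS.exists_eq_apply hy
  have hzy : φ z ≤ φ (simplexIFS p i z) := hmax hz
  have hxy : φ x ≤ φ (simplexIFS p i z) := hmax hx
  rw [map_simplexIFS] at hzy hxy
  linarith [hM i]

theorem IsAttractor.vertex_mem {p : ι → P} (hS : IsAttractor (simplexIFS p) S) (i : ι) : p i ∈ S :=
  hS.mem_of_isFixedPt (lipschitzWith_simplexIFS p i) (by norm_num) (midpoint_self ℝ (p i))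

variable {b : AffineBasis ι ℝ P}

theorem coord_simplexIFS_self (i : ι) (x : P) :
    b.coord i (simplexIFS b i x) = (b.coord i x + 1) / 2 := by
  rw [map_simplexIFS, b.coord_apply_eq]

theorem coord_simplexIFS_of_ne {i j : ι} (hij : i ≠ j) (x : P) :
    b.coord i (simplexIFS b j x) = b.coord i x / 2 := by
  rw [map_simplexIFS, b.coord_apply_ne hij, add_zero]

variable [FiniteDimensional ℝ V]

theorem IsAttractor.coord_mem_Icc (hS : IsAttractor (simplexIFS b) S) (i : ι) {x : P} (hx : x ∈ S) :
    b.coord i x ∈ Icc 0 1 := by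
  classical
  have hcont : Continuous (b.coord i) := AffineMap.continuous_of_finiteDimensional _
  constructor
  · have hneg : (-b.coord i) x ≤ 0 :=
      hS.map_le_of_forall_vertex (by simpa using hcont.neg) (fun j => by
        rw [AffineMap.coe_neg, Pi.neg_apply, b.coord_apply]; split_ifs <;> norm_num) hx
    simpa using hneg
  · exact hS.map_le_of_forall_vertex hcont
      (fun j => by rw [b.coord_apply]; split_ifs <;> norm_num) hx

theorem sameCell_vertex_of_lt_coord (hS : IsAttractor (simplexIFS b) S) (i : ι) {n : ℕ} {x : P}
    (hx : x ∈ S) (h : 1 - 2⁻¹ ^ n < b.coord i x) : SameCell (simplexIFS b) S n x (b i) := by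
  induction n generalizing x with
  | zero => exact .zero hx (hS.vertex_mem i)
  | succ n ih =>
    obtain ⟨j, y, hy, rfl⟩ := hS.exists_eq_apply hx
    have hij : i = j := by
      by_contra hij
      have hpow : (2⁻¹ : ℝ) ^ n ≤ 1 := pow_le_one₀ (by norm_num) (by norm_num)
      rw [coord_simplexIFS_of_ne hij, pow_succ] at h
      linarith [(hS.coord_mem_Icc i hy).2]
    subst hij
    rw [coord_simplexIFS_self, pow_succ] at h
    have hcell := (ih hy (by linarith)).succ i
    rwa [show simplexIFS b i (b i) = b i from midpoint_self ℝ (b i)] at hcell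

/-- Two different first-level cells `i` and `j` meet at the midpoint of the vertices `i` and `j`. If
`x` is in the first and `y` in the second, closeness of their coordinates `i` and `j` forces both
towards this midpoint. -/
theorem exists_sameCell_of_abs_coord_sub_lt (hS : IsAttractor (simplexIFS b) S) {n : ℕ} {x y : P}
    (hx : x ∈ S) (hy : y ∈ S) (h : ∀ i, |b.coord i x - b.coord i y| < 2⁻¹ ^ n) :
    ∃ z, SameCell (simplexIFS b) S n x z ∧ SameCell (simplexIFS b) S n y z := by
  induction n generalizing x y with
  | zero => exact ⟨x, .zero hx hx, .zero hy hx⟩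
  | succ n ih =>
    obtain ⟨i, u, hu, rfl⟩ := hS.exists_eq_apply hx
    obtain ⟨j, v, hv, rfl⟩ := hS.exists_eq_apply hy
    simp only [abs_lt, pow_succ] at h
    obtain rfl | hij := eq_or_ne i j
    · obtain ⟨z, huz, hvz⟩ := ih hu hv fun k => by
        have := h k
        simp only [map_simplexIFS] at this
        rw [abs_lt]
        constructor <;> linarith
      exact ⟨simplexIFS b i z, huz.succ i, hvz.succ i⟩
    · have hu_near : SameCell (simplexIFS b) S n u (b j) := by
        refine sameCell_vertex_of_lt_coord hS j hu ?_
        have := (h j).1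
        rw [coord_simplexIFS_of_ne hij.symm, coord_simplexIFS_self] at this
        linarith [(hS.coord_mem_Icc j hv).1]
      have hv_near : SameCell (simplexIFS b) S n v (b i) := by
        refine sameCell_vertex_of_lt_coord hS i hv ?_
        have := (h i).2
        rw [coord_simplexIFS_of_ne hij, coord_simplexIFS_self] at this
        linarith [(hS.coord_mem_Icc i hu).1]
      have hmid : simplexIFS b i (b j) = simplexIFS b j (b i) := midpoint_comm _ _
      exact ⟨simplexIFS b i (b j), hu_near.succ i, hmid ▸ hv_near.succ j⟩

theorem cellsLinked_simplexIFS (hS : IsAttractor (simplexIFS b) S) :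
    CellsLinked (simplexIFS b) S 2⁻¹ := by
  have : Finite ι := b.finite
  choose K hK using fun i => (b.coord i).lipschitzWith_of_finiteDimensional
  obtain ⟨L, hL⟩ := Finite.exists_le K
  refine ⟨(L + 1)⁻¹, by positivity, fun n x hx y hy hxy => ?_⟩
  refine exists_sameCell_of_abs_coord_sub_lt hS hx hy fun i => ?_
  push_cast at hxy
  calc |b.coord i x - b.coord i y| ≤ L * dist x y := ((hK i).weaken (hL i)).dist_le_mul x y
    _ ≤ L * ((L + 1 : ℝ)⁻¹ * 2⁻¹ ^ n) := by gcongr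
    _ = L / (L + 1) * 2⁻¹ ^ n := by ring
    _ < 1 * 2⁻¹ ^ n := by
      gcongr
      rw [div_lt_one (by positivity)]
      linarith
    _ = 2⁻¹ ^ n := one_mul _

end SimplexIFS

theorem stmt_11_general {ι κ V W P Q 𝕜 E : Type*} [NormedAddCommGroup V] [NormedSpace ℝ V]
    [FiniteDimensional ℝ V] [MetricSpace P] [NormedAddTorsor V P] [NormedAddCommGroup W]
    [NormedSpace ℝ W] [FiniteDimensional ℝ W] [MetricSpace Q] [NormedAddTorsor W Q]
    [NormedField 𝕜] [SeminormedAddCommGroup E] [NormedSpace 𝕜 E]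
    {p : AffineBasis ι ℝ P} {q : AffineBasis κ ℝ Q} {S : Set P} {T : Set Q}
    (hS : IsAttractor (simplexIFS p) S) (hT : IsAttractor (simplexIFS q) T) {N : ℕ} (hN : 1 ≤ N)
    {α : (Fin N → ι) → (Fin N → κ) → P × Q → 𝕜} {h : (Fin N → ι) → (Fin N → κ) → P × Q → E}
    {f : P × Q → E} (hfb : IsBounded (f '' (S ×ˢ T)))
    (hf : ∀ ω η, ∀ t ∈ S, ∀ s ∈ T, f (wordComp (simplexIFS p) ω t, wordComp (simplexIFS q) η s) =
      α ω η (t, s) • f (t, s) + h ω η (t, s))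
    {β A : ℝ≥0} (hh : ∀ ω η, ∃ C, HolderOnWith C β (h ω η) (S ×ˢ T))
    (hα : ∀ ω η, ∃ C, HolderOnWith C β (α ω η) (S ×ˢ T))
    (hαA : ∀ ω η, ∀ x ∈ S ×ˢ T, ‖α ω η x‖ ≤ A) (hA : A < (2⁻¹ ^ N) ^ (β : ℝ)) :
    ∃ C, HolderOnWith C β f (S ×ˢ T) := by
  have : Finite ι := p.finite
  have : Finite κ := q.finite
  let F : (Fin N → ι) → P → P := wordComp (simplexIFS p)
  let G : (Fin N → κ) → Q → Q := wordComp (simplexIFS q)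
  have hlink : CellsLinked (prodIFS F G) (S ×ˢ T) (2⁻¹ ^ N) :=
    ((cellsLinked_simplexIFS hS).wordComp N).prodIFS ((cellsLinked_simplexIFS hT).wordComp N)
  exact exists_holderOnWith_of_apply_eq_smul_add
    (lipschitzWith_prodIFS (lipschitzWith_wordComp (lipschitzWith_simplexIFS p))
      (lipschitzWith_wordComp (lipschitzWith_simplexIFS q)))
    (by positivity) (pow_lt_one₀ zero_le (by norm_num) (by lia))
    (mapsTo_prodIFS (mapsTo_wordComp hS.mapsTo) (mapsTo_wordComp hT.mapsTo))
    (hS.isCompact.prod hT.isCompact).isBounded hlink hfb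
    (fun i x hx => hf i.1 i.2 x.1 hx.1 x.2 hx.2) (fun i => hα i.1 i.2) (fun i => hh i.1 i.2)
    (fun i => hαA i.1 i.2) hA

theorem lt_ciInf_of_forall_lt {ι α : Type*} [Finite ι] [Nonempty ι]
    [ConditionallyCompleteLinearOrder α] {g : ι → α} {a : α} (h : ∀ i, a < g i) : a < ⨅ i, g i := by
  obtain ⟨i, hi⟩ := exists_eq_ciInf_of_finite (f := g)
  exact hi ▸ h i

theorem self_lt_nnreal_rpow_of_lt_one {x : ℝ≥0} {y : ℝ} (hx₀ : 0 < x) (hx₁ : x < 1) (hy : y < 1) :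
    x < x ^ y := by
  simpa using NNReal.rpow_lt_rpow_of_exponent_gt hx₀ hx₁ hy

theorem affineIndependent_of_forall_dist_eq {V P : Type*} [SeminormedAddCommGroup V]
    [NormedSpace ℝ V] [PseudoMetricSpace P] [NormedAddTorsor V P] {p : Fin 3 → P} {l : ℝ}
    (hl : l ≠ 0) (h : ∀ i j, i ≠ j → dist (p i) (p j) = l) : AffineIndependent ℝ p := by
  rw [affineIndependent_iff_not_collinear_of_ne (i₁ := 0) (i₂ := 1) (i₃ := 2)
    (by decide) (by decide) (by decide)]
  have not_wbtw {i j k : Fin 3} (hij : i ≠ j) (hjk : j ≠ k) (hik : i ≠ k) :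
      ¬ Wbtw ℝ (p i) (p j) (p k) := fun hw => by
    have hsum := hw.dist_add_dist
    rw [h i j hij, h j k hjk, h i k hik] at hsum
    exact hl (by linarith)
  intro hcol
  obtain hw | hw | hw := hcol.wbtw_or_wbtw_or_wbtw <;>
    exact not_wbtw (by decide) (by decide) (by decide) hw

section SierpinskiGasket

variable {p : Fin 3 → E2} {S : Set E2}

theorem Lmap_eq_simplexIFS (p : Fin 3 → E2) : Lmap p = simplexIFS p := by
  funext i t
  rw [Lmap, simplexIFS, midpoint_eq_smul_add, invOf_eq_inv]

theorem wordMap_eq_wordComp (p : Fin 3 → E2) {n : ℕ} (ω : Fin n → Fin 3) :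
    wordMap p ω = wordComp (simplexIFS p) ω := by
  rw [wordMap, Lmap_eq_simplexIFS, wordComp]

theorem IsSG.isAttractor (hS : IsSG p S) : IsAttractor (simplexIFS p) S :=
  Lmap_eq_simplexIFS p ▸ ⟨hS.2.1, hS.2.2.1, hS.2.2.2⟩

theorem IsEquilateral.affineIndependent (hp : IsEquilateral p) : AffineIndependent ℝ p :=
  affineIndependent_of_forall_dist_eq (dist_ne_zero.2 (hp.1.ne (by decide : (0 : Fin 3) ≠ 1)))
    fun i j hij => hp.2 i j 0 1 hij (by decide)

/-- The vertices of an equilateral triangle, as an affine basis of the plane. -/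
def IsEquilateral.affineBasis (hp : IsEquilateral p) : AffineBasis (Fin 3) ℝ E2 :=
  ⟨p, hp.affineIndependent,
    hp.affineIndependent.affineSpan_eq_top_iff_card_eq_finrank_add_one.2 (by simp)⟩

theorem dist_le_dist2 (x y : E2 × E2) : dist x y ≤ dist2 x y :=
  max_le (Real.le_sqrt_of_sq_le (le_add_of_nonneg_right (sq_nonneg _)))
    (Real.le_sqrt_of_sq_le (le_add_of_nonneg_left (sq_nonneg _)))

theorem dist2_le_two_mul_dist (x y : E2 × E2) : dist2 x y ≤ 2 * dist x y := by
  have h₁ : dist x.1 y.1 ≤ dist x y := le_max_left _ _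
  have h₂ : dist x.2 y.2 ≤ dist x y := le_max_right _ _
  refine Real.sqrt_le_iff.2 ⟨by positivity, ?_⟩
  nlinarith [pow_le_pow_left₀ dist_nonneg h₁ 2, pow_le_pow_left₀ dist_nonneg h₂ 2]

variable {R : Set (E2 × E2)} {g : E2 × E2 → ℝ}

theorem HolderOn2.exists_holderOnWith {K γ : ℝ} {β : ℝ≥0} (hg : HolderOn2 R g K γ)
    (hR : IsBounded R) (hβ : β ≤ γ) : ∃ C, HolderOnWith C β g R := by
  lift γ to ℝ≥0 using β.coe_nonneg.trans hβ
  have hg' : HolderOnWith (K.toNNReal * 2 ^ (γ : ℝ)) γ g R :=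
    holderOnWith_of_dist_le fun x hx y hy => by
      have hdist₀ : 0 ≤ dist2 x y := Real.sqrt_nonneg _
      calc dist (g x) (g y) ≤ K * dist2 x y ^ (γ : ℝ) := hg x hx y hy
        _ ≤ K.toNNReal * (2 * dist x y) ^ (γ : ℝ) := by
          gcongr
          exacts [Real.le_coe_toNNReal K, dist2_le_two_mul_dist x y]
        _ = _ := by
          rw [Real.mul_rpow zero_le_two dist_nonneg, ← mul_assoc]
          push_cast
          rfl
  exact exists_holderOnWith_of_le hR hg' (by exact_mod_cast hβ)

theorem HolderOn2.continuousOn {K γ : ℝ} (hg : HolderOn2 R g K γ) (hR : IsBounded R)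
    (hγ : 0 < γ) : ContinuousOn g R := by
  lift γ to ℝ≥0 using hγ.le
  obtain ⟨C, hC⟩ := hg.exists_holderOnWith hR le_rfl
  exact hC.continuousOn (by exact_mod_cast hγ)

theorem holderOn2_of_holderOnWith {C β : ℝ≥0} (hg : HolderOnWith C β g R) :
    HolderOn2 R g C β := fun x hx y hy => by
  calc |g x - g y| ≤ C * dist x y ^ (β : ℝ) := hg.dist_le hx hy
    _ ≤ C * dist2 x y ^ (β : ℝ) := by
      gcongr
      exact dist_le_dist2 x y

theorem abs_le_supAbs (hR : IsCompact R) (hg : ContinuousOn g R) {x : E2 × E2} (hx : x ∈ R) :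
    |g x| ≤ supAbs R g :=
  le_csSup (hR.bddAbove_image hg.abs) (mem_image_of_mem _ hx)

theorem abs_le_iSup_supAbs {κ : Type*} [Finite κ] {g : κ → E2 × E2 → ℝ} (hR : IsCompact R)
    (hg : ∀ k, ContinuousOn (g k) R) (k : κ) {x : E2 × E2} (hx : x ∈ R) :
    |g k x| ≤ ⨆ k, supAbs R (g k) :=
  (abs_le_supAbs hR (hg k) hx).trans
    (le_ciSup (f := fun k => supAbs R (g k)) (finite_range _).bddAbove k)

end SierpinskiGasket

/-- If `‖α‖_∞ := max_{ω,η} ‖α_{ωη}‖_∞ = 1/2^N`, then the fractal interpolation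
function `f` on `SG' × SG''` is Hölder continuous with exponent `s − μ` for some
`0 < μ < s`, where `s = min{s_h, s_α}`. -/
theorem stmt_11 (p q : Fin 3 → E2) (SG' SG'' : Set E2)
    (hSG' : IsSG p SG') (hSG'' : IsSG q SG'') (N : ℕ) (hN : 1 ≤ N)
    (hdiam : ∀ x ∈ SG' ×ˢ SG'', ∀ y ∈ SG' ×ˢ SG'', dist2 x y ≤ 1)
    (α h : Word N → Word N → E2 × E2 → ℝ)
    (f : E2 × E2 → ℝ) (hfc : ContinuousOn f (SG' ×ˢ SG''))
    (hf : ∀ ω η : Word N, ∀ t ∈ SG', ∀ s ∈ SG'',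
      f (wordMap p ω t, wordMap q η s) = α ω η (t, s) * f (t, s) + h ω η (t, s))
    (sh : ℝ) (hsh : 0 < sh ∧ sh ≤ 1) (Kh : ℝ)
    (hhHolder : ∀ ω η, HolderOn2 (SG' ×ˢ SG'') (h ω η) Kh sh)
    (sα : Word N → Word N → ℝ) (hsα : ∀ ω η, 0 < sα ω η ∧ sα ω η ≤ 1)
    (Kα : Word N → Word N → ℝ)
    (hαHolder : ∀ ω η, HolderOn2 (SG' ×ˢ SG'') (α ω η) (Kα ω η) (sα ω η))
    (hαnorm : ∀ ω η, supAbs (SG' ×ˢ SG'') (α ω η) < 1)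
    (hcase : (⨆ ωη : Word N × Word N, supAbs (SG' ×ˢ SG'') (α ωη.1 ωη.2)) = 1 / 2 ^ N) :
    ∃ μ : ℝ, 0 < μ ∧ μ < min sh (⨅ ωη : Word N × Word N, sα ωη.1 ωη.2) ∧
      ∃ C : ℝ, HolderOn2 (SG' ×ˢ SG'') f C
        (min sh (⨅ ωη : Word N × Word N, sα ωη.1 ωη.2) - μ) := by
  set s := min sh (⨅ ωη : Word N × Word N, sα ωη.1 ωη.2)
  have hs_pos : 0 < s := lt_min hsh.1 (lt_ciInf_of_forall_lt fun ωη => (hsα ωη.1 ωη.2).1)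
  have hs_sh : s ≤ sh := min_le_left _ _
  have hs_sα (ω η : Word N) : s ≤ sα ω η :=
    (min_le_right _ _).trans (ciInf_le (finite_range _).bddBelow (ω, η))
  obtain ⟨β, hβ_pos, hβ_lt⟩ := exists_between hs_pos
  lift β to ℝ≥0 using hβ_pos.le
  have hcpt : IsCompact (SG' ×ˢ SG'') := hSG'.isAttractor.isCompact.prod hSG''.isAttractor.isCompact
  have hα_le (ω η : Word N) (x) (hx : x ∈ SG' ×ˢ SG'') : ‖α ω η x‖ ≤ (2⁻¹ ^ N : ℝ≥0) :=
    (abs_le_iSup_supAbs hcpt (fun ωη : Word N × Word N =>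
      (hαHolder ωη.1 ωη.2).continuousOn hcpt.isBounded (hsα _ _).1) (ω, η) hx).trans_eq
      (by simp [hcase])
  obtain ⟨C, hC⟩ := stmt_11_general (p := hSG'.1.affineBasis) (q := hSG''.1.affineBasis)
    hSG'.isAttractor hSG''.isAttractor hN (hcpt.image_of_continuousOn hfc).isBounded
    (fun ω η => wordMap_eq_wordComp p ω ▸ wordMap_eq_wordComp q η ▸ hf ω η)
    (fun ω η => (hhHolder ω η).exists_holderOnWith hcpt.isBounded (hβ_lt.le.trans hs_sh))
    (fun ω η => (hαHolder ω η).exists_holderOnWith hcpt.isBounded (hβ_lt.le.trans (hs_sα ω η)))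
    hα_le (self_lt_nnreal_rpow_of_lt_one (by positivity)
      (pow_lt_one₀ zero_le (by norm_num) (by lia)) (hβ_lt.trans_le (hs_sh.trans hsh.2)))
  exact ⟨s - β, sub_pos.2 hβ_lt, sub_lt_self s hβ_pos, C,
    (sub_sub_cancel s β).symm ▸ holderOn2_of_holderOnWith hC⟩
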